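/- arXiv:1809.02039 — 2 statements merged into one kernel-verified Lean document; each statement's English description precedes it below -/
import Mathlib

section
/- Let (X,T) be a flow with F = Fix(X,T), h : F → F_L a topological embedding into the constant functions of L(ℝ), and p ∈ X \ F. Then there exists a closed neighborhood A of p in X such that the set G(A) = {f ∈ C_{T,h}(X, L(ℝ)) : f(A) ∩ F_L = ∅} is open and dense in C_{T,h}(X, L(ℝ)). -/
/-!
An element `f` of `CTh X T h` is the same thing as the continuous function `g x = f x 0` on `X`:
equivariance gives `f x t = g (T t x)`, so `g` takes values in `[0,1]`, moves with speed at most `1`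
along orbits, and restricts to `h` on the fixed points. Uniform convergence of the functions `g`
implies convergence of the corresponding `f`.

Openness of `G(A)` holds for every compact `A`, since the constant functions are closed in `C(ℝ,ℝ)`.

For density, a flow average `x ↦ b⁻¹ ∫₀ᵇ g (T s x) ds` agrees with `g` at fixed points, is
differentiable along orbits, and, when `g` takes values in `[0,1]` and has speed at most `1`, has speed
at most `min 1 (1 / b)`. Hence
`g₁ = (1 - δ) avg_δ g + δ avg_2 g` is uniformly close to `g`, is differentiable along orbits, and has
speed at most `1 - δ / 2`. This leaves room to add a small function which is *not* differentiable at
some time of each orbit through `A`; the sum is then nonconstant on these orbits.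

The nondifferentiable function comes from the classical construction of local sections: if `T b p ≠ p`
then `Q = avg_b (min (dist · p) 1)` has positive derivative along orbits near `p`, so, with
`q = Q - Q p`, each orbit passing close to `p` crosses `{q = 0}` transversally, and `|q|` has a corner
there. With a weight `κ = (Q ∘ T c - Q)²`, which vanishes at fixed points but not near `p`, the
perturbation is the convex combination `(1 - η κ) g₁ + η κ (1 + |q|) / 2`, so it stays in `[0,1]`.
-/

/-- L(ℝ): the 1-Lipschitz functions ℝ → [0,1], inside C(ℝ,ℝ) with the compact-open
topology. -/
def LR : Set C(ℝ, ℝ) := {φ | LipschitzWith 1 φ ∧ ∀ t : ℝ, φ t ∈ Set.Icc (0:ℝ) 1}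

/-- C_{T,h}(X, L(ℝ)): continuous ℝ-equivariant maps f : X → L(ℝ) with f|_F = h
(h being recorded by the constant value of the image function), as a subspace of
C(X, C(ℝ,ℝ)) with the compact-open (uniform) topology. -/
abbrev CTh (X : Type*) [TopologicalSpace X] (T : ℝ → X → X)
    (h : {x : X // ∀ t : ℝ, T t x = x} → ℝ) : Type _ :=
  {f : C(X, C(ℝ, ℝ)) //
    (∀ x, f x ∈ LR) ∧
    (∀ (s : ℝ) (x : X) (t : ℝ), f (T s x) t = f x (t + s)) ∧
    (∀ x : {x : X // ∀ t : ℝ, T t x = x}, ∀ t : ℝ, f x.1 t = h x)}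

/-! ### Averages along a flow -/

section Flow

variable {X : Type*} [MetricSpace X] {T : ℝ → X → X}

/-- The average of `g` over the orbit segment of length `b` starting at `x`. -/
noncomputable def flowAvg (T : ℝ → X → X) (b : ℝ) (g : X → ℝ) (x : X) : ℝ :=
  b⁻¹ * ∫ s in (0:ℝ)..b, g (T s x)

/-- `g` moves with speed at most `C` along orbits. For a flow, comparing times `0` and `t` at every
base point is the same as comparing arbitrary times. -/
def OrbitLip (T : ℝ → X → X) (C : ℝ) (g : X → ℝ) : Prop :=
  ∀ x t, |g (T t x) - g x| ≤ C * |t|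

/-- `g` is differentiable along orbits. For a flow, differentiability at time `0` at every base point
gives it at all times. -/
def OrbitDiff (T : ℝ → X → X) (g : X → ℝ) : Prop :=
  ∀ x, DifferentiableAt ℝ (fun t => g (T t x)) 0

lemma continuous_orbit (hT : Continuous fun q : ℝ × X => T q.1 q.2) (x : X) :
    Continuous fun t => T t x :=
  hT.comp (Continuous.prodMk continuous_id continuous_const)

lemma continuous_time (hT : Continuous fun q : ℝ × X => T q.1 q.2) (t : ℝ) :
    Continuous fun x => T t x :=
  hT.comp (Continuous.prodMk continuous_const continuous_id)

lemma continuous_flowAvg (hT : Continuous fun q : ℝ × X => T q.1 q.2) (b : ℝ) {g : X → ℝ}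
    (hg : Continuous g) : Continuous (flowAvg T b g) := by
  unfold flowAvg
  refine continuous_const.mul ?_
  apply intervalIntegral.continuous_parametric_intervalIntegral_of_continuous'
  exact hg.comp (hT.comp continuous_swap)

lemma flowAvg_hasDerivAt (hT : Continuous fun q : ℝ × X => T q.1 q.2)
    (hTadd : ∀ s t x, T (s + t) x = T s (T t x)) (b : ℝ) {g : X → ℝ}
    (hg : Continuous g) (x : X) (t : ℝ) :
    HasDerivAt (fun t => flowAvg T b g (T t x)) (b⁻¹ * (g (T b (T t x)) - g (T t x))) t := by
  have hc : Continuous fun s => g (T s x) := hg.comp (continuous_orbit hT x)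
  have key : (fun t => flowAvg T b g (T t x)) = fun t =>
      b⁻¹ * ((∫ s in (0:ℝ)..(b + t), g (T s x)) - ∫ s in (0:ℝ)..t, g (T s x)) := by
    funext t
    unfold flowAvg
    simp_rw [← hTadd]
    rw [intervalIntegral.integral_comp_add_right (fun s => g (T s x)) t, zero_add,
      intervalIntegral.integral_interval_sub_left (hc.intervalIntegrable _ _)
        (hc.intervalIntegrable _ _)]
  rw [key, ← hTadd]
  have h1 : ∀ u, HasDerivAt (fun u => ∫ s in (0:ℝ)..u, g (T s x)) (g (T u x)) u := fun u =>
    (hc.integral_hasStrictDerivAt 0 u).hasDerivAt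
  exact (((h1 (b + t)).comp_const_add b t).sub (h1 t)).const_mul _

lemma orbitDiff_flowAvg (hT : Continuous fun q : ℝ × X => T q.1 q.2)
    (hTadd : ∀ s t x, T (s + t) x = T s (T t x)) (b : ℝ) {g : X → ℝ} (hg : Continuous g) :
    OrbitDiff T (flowAvg T b g) :=
  fun x => (flowAvg_hasDerivAt hT hTadd b hg x 0).differentiableAt

lemma orbitLip_flowAvg (hT : Continuous fun q : ℝ × X => T q.1 q.2) (hT0 : ∀ x, T 0 x = x)
    (hTadd : ∀ s t x, T (s + t) x = T s (T t x)) {b C : ℝ} {g : X → ℝ} (hg : Continuous g)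
    (hC : ∀ z, |b⁻¹ * (g (T b z) - g z)| ≤ C) : OrbitLip T C (flowAvg T b g) := by
  intro x t
  have := Convex.norm_image_sub_le_of_norm_hasDerivWithin_le (s := Set.univ) (C := C)
    (f := fun t => flowAvg T b g (T t x)) (x := 0) (y := t)
    (fun s _ => (flowAvg_hasDerivAt hT hTadd b hg x s).hasDerivWithinAt)
    (fun s _ => hC (T s x)) convex_univ (Set.mem_univ _) (Set.mem_univ _)
  simpa [hT0] using this

lemma flowAvg_fixed {b : ℝ} (hb : 0 < b) (g : X → ℝ) {x : X} (hx : ∀ t, T t x = x) :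
    flowAvg T b g x = g x := by
  simp [flowAvg, hx, hb.ne']

lemma flowAvg_sub_le (hT : Continuous fun q : ℝ × X => T q.1 q.2) {b : ℝ} (hb : 0 < b) {g : X → ℝ}
    (hg : Continuous g) {x : X} {a C : ℝ} (h : ∀ s ∈ Set.Icc 0 b, |g (T s x) - a| ≤ C) :
    |flowAvg T b g x - a| ≤ C := by
  have hc : Continuous fun s => g (T s x) := hg.comp (continuous_orbit hT x)
  have e : flowAvg T b g x - a = b⁻¹ * ∫ s in (0:ℝ)..b, (g (T s x) - a) := by
    rw [intervalIntegral.integral_sub (hc.intervalIntegrable _ _) (by simp)]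
    simp only [flowAvg, intervalIntegral.integral_const, sub_zero, smul_eq_mul]
    field_simp
  have := intervalIntegral.norm_integral_le_of_norm_le_const (a := 0) (b := b) (C := C)
    (f := fun s => g (T s x) - a) (fun s hs => by
      rw [Set.uIoc_of_le hb.le] at hs
      exact h s ⟨hs.1.le, hs.2⟩)
  rw [e, abs_mul, abs_of_pos (inv_pos.2 hb), inv_mul_le_iff₀ hb]
  rw [sub_zero, abs_of_pos hb, Real.norm_eq_abs] at this
  linarith

lemma flowAvg_mem_Icc (hT : Continuous fun q : ℝ × X => T q.1 q.2) {b : ℝ} (hb : 0 < b) {g : X → ℝ}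
    (hg : Continuous g) (h : ∀ x, g x ∈ Set.Icc (0:ℝ) 1) (x : X) :
    flowAvg T b g x ∈ Set.Icc (0:ℝ) 1 := by
  have := flowAvg_sub_le hT hb hg (x := x) (a := 1/2) (C := 1/2) (fun s _ => by
    have := h (T s x)
    rw [abs_le]; constructor <;> linarith [this.1, this.2])
  rw [abs_le] at this
  constructor <;> linarith [this.1, this.2]

/-! ### Perturbing a function along orbits -/

/-- The absolute value of a function that crosses `0` transversally has a corner. -/
lemma not_differentiableAt_abs_of_hasDerivAt {u : ℝ → ℝ} {m : ℝ} (hu : HasDerivAt u m 0)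
    (h0 : u 0 = 0) (hm : m ≠ 0) : ¬ DifferentiableAt ℝ (fun t => |u t|) 0 := by
  intro hd
  have hmin : IsLocalMin (fun t => |u t|) 0 :=
    Filter.Eventually.of_forall fun t => by simp [h0]
  have h1 : HasDerivAt (fun t => |u t|) 0 0 := by
    have := hd.hasDerivAt
    rwa [hmin.deriv_eq_zero] at this
  have h2 : HasDerivAt u 0 0 := by
    rw [hasDerivAt_iff_isLittleO] at h1 ⊢
    simp only [h0, abs_zero, sub_zero, smul_zero] at h1 ⊢
    exact Asymptotics.isLittleO_abs_left.1 h1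
  exact hm (hu.unique h2)

/-- Any admissible `g` is uniformly approximated by admissible functions that are nonconstant on every
orbit crossing `{q = 0}` transversally at a point where `κ` is positive. -/
lemma exists_perturbation (hT : Continuous fun q : ℝ × X => T q.1 q.2) (hT0 : ∀ x, T 0 x = x)
    (hTadd : ∀ s t x, T (s + t) x = T s (T t x))
    {κ q : X → ℝ} {K : ℝ} (hK : 0 ≤ K)
    (κc : Continuous κ) (qc : Continuous q) (κI : ∀ x, κ x ∈ Set.Icc (0:ℝ) 1) (qI : ∀ x, |q x| ≤ 1)
    (κL : OrbitLip T K κ) (qL : OrbitLip T K q) (κD : OrbitDiff T κ)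
    (κF : ∀ x, (∀ t, T t x = x) → κ x = 0)
    {g : X → ℝ} (gc : Continuous g) (gI : ∀ x, g x ∈ Set.Icc (0:ℝ) 1) (gL : OrbitLip T 1 g)
    {δ : ℝ} (hδ : 0 < δ) (hδ1 : δ < 1) :
    ∃ g' : X → ℝ, Continuous g' ∧ (∀ x, g' x ∈ Set.Icc (0:ℝ) 1) ∧ OrbitLip T 1 g' ∧
      (∀ x, (∀ t, T t x = x) → g' x = g x) ∧ (∀ x, |g' x - g x| ≤ 3 * δ) ∧
      ∀ y m, q y = 0 → 0 < κ y → HasDerivAt (fun t => q (T t y)) m 0 → m ≠ 0 →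
        ¬ ∃ c, ∀ t, g' (T t y) = c := by
  set u := flowAvg T δ g with hu
  set v := flowAvg T 2 g with hv
  have uI : ∀ x, u x ∈ Set.Icc (0:ℝ) 1 := flowAvg_mem_Icc hT hδ gc gI
  have vI : ∀ x, v x ∈ Set.Icc (0:ℝ) 1 := flowAvg_mem_Icc hT two_pos gc gI
  have uL : OrbitLip T 1 u := by
    refine orbitLip_flowAvg hT hT0 hTadd gc fun z => ?_
    have := gL z δ
    rw [abs_mul, abs_of_pos (inv_pos.2 hδ), inv_mul_le_iff₀ hδ]
    rw [abs_of_pos hδ] at this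
    linarith
  have vL : OrbitLip T (1/2) v := by
    refine orbitLip_flowAvg hT hT0 hTadd gc fun z => ?_
    have h1 := gI z
    have h2 := gI (T 2 z)
    rw [abs_le]
    constructor <;> linarith [h1.1, h1.2, h2.1, h2.2]
  have ug : ∀ x, |u x - g x| ≤ δ := fun x => flowAvg_sub_le hT hδ gc fun s hs => by
    have := gL x s
    rw [abs_of_nonneg hs.1] at this
    linarith [hs.2]
  set g₁ : X → ℝ := fun x => (1 - δ) * u x + δ * v x with hg₁
  have g₁c : Continuous g₁ := (continuous_const.mul (continuous_flowAvg hT _ gc)).add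
    (continuous_const.mul (continuous_flowAvg hT _ gc))
  have g₁I : ∀ x, g₁ x ∈ Set.Icc (0:ℝ) 1 := fun x =>
    (convex_Icc (0:ℝ) 1) (uI x) (vI x) (by linarith) hδ.le (by ring)
  have g₁L : OrbitLip T (1 - δ / 2) g₁ := by
    intro x t
    have e : g₁ (T t x) - g₁ x = (1 - δ) * (u (T t x) - u x) + δ * (v (T t x) - v x) := by
      simp only [hg₁]; ring
    rw [e]
    refine (abs_add_le _ _).trans ?_
    rw [abs_mul, abs_mul, abs_of_pos hδ, abs_of_pos (by linarith : 0 < 1 - δ)]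
    nlinarith [mul_le_mul_of_nonneg_left (uL x t) (by linarith : 0 ≤ 1 - δ),
      mul_le_mul_of_nonneg_left (vL x t) hδ.le]
  have g₁D : OrbitDiff T g₁ := fun x =>
    ((orbitDiff_flowAvg hT hTadd δ gc x).const_mul _).add
      ((orbitDiff_flowAvg hT hTadd 2 gc x).const_mul _)
  have g₁F : ∀ x, (∀ t, T t x = x) → g₁ x = g x := fun x hx => by
    simp only [hg₁, hu, hv, flowAvg_fixed hδ g hx, flowAvg_fixed two_pos g hx]; ring
  have g₁g : ∀ x, |g₁ x - g x| ≤ 2 * δ := fun x => by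
    have e : g₁ x - g x = (u x - g x) + δ * (v x - u x) := by simp only [hg₁]; ring
    have h1 : |v x - u x| ≤ 1 := by
      rw [abs_le]; constructor <;> linarith [(uI x).1, (uI x).2, (vI x).1, (vI x).2]
    rw [e]
    refine (abs_add_le _ _).trans ?_
    rw [abs_mul, abs_of_pos hδ]
    nlinarith [ug x]
  -- the speed of `κ * (θ - g₁)` is at most `2 * K + 1`, and `g₁` leaves room for speed `δ / 2`
  set η := δ / 2 / (2 * K + 1) with hη
  have η0 : 0 < η := by positivity
  have ηK : η * (2 * K + 1) = δ / 2 := by rw [hη]; field_simp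
  have ηδ : η ≤ δ / 2 := by nlinarith
  set θ : X → ℝ := fun x => (1 + |q x|) / 2 with hθ
  have θc : Continuous θ := (continuous_const.add qc.abs).div_const 2
  have θI : ∀ x, θ x ∈ Set.Icc (0:ℝ) 1 := fun x => by
    constructor <;> simp only [hθ] <;> linarith [qI x, abs_nonneg (q x)]
  have θL : OrbitLip T K θ := by
    intro x t
    have h1 : |θ (T t x) - θ x| = |(|q (T t x)| - |q x|)| / 2 := by
      have e : θ (T t x) - θ x = (|q (T t x)| - |q x|) / 2 := by simp only [hθ]; ring
      rw [e, abs_div, abs_two]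
    have h2 := abs_abs_sub_abs_le_abs_sub (q (T t x)) (q x)
    have h3 := qL x t
    have h4 := abs_nonneg (q (T t x) - q x)
    rw [h1]; linarith
  have dI : ∀ x, |θ x - g₁ x| ≤ 1 := fun x => by
    rw [abs_le]; constructor <;> linarith [(θI x).1, (θI x).2, (g₁I x).1, (g₁I x).2]
  refine ⟨fun x => g₁ x + η * (κ x * (θ x - g₁ x)), ?_, ?_, ?_, ?_, ?_, ?_⟩
  · exact g₁c.add (continuous_const.mul (κc.mul (θc.sub g₁c)))
  · intro x
    have h1 : 0 ≤ η * κ x := mul_nonneg η0.le (κI x).1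
    have h2 : η * κ x ≤ 1 := by nlinarith [(κI x).1, (κI x).2]
    have := (convex_Icc (0:ℝ) 1) (g₁I x) (θI x) (sub_nonneg.2 h2) h1 (by ring)
    convert this using 1
    simp only [smul_eq_mul]; ring
  · intro x t
    have e : g₁ (T t x) + η * (κ (T t x) * (θ (T t x) - g₁ (T t x)))
        - (g₁ x + η * (κ x * (θ x - g₁ x))) = (g₁ (T t x) - g₁ x)
          + η * ((κ (T t x) - κ x) * (θ (T t x) - g₁ (T t x))
            + κ x * ((θ (T t x) - θ x) - (g₁ (T t x) - g₁ x))) := by ring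
    have h1 : |(κ (T t x) - κ x) * (θ (T t x) - g₁ (T t x))| ≤ K * |t| := by
      rw [abs_mul]
      nlinarith [dI (T t x), κL x t, abs_nonneg (κ (T t x) - κ x),
        abs_nonneg (θ (T t x) - g₁ (T t x))]
    have h2 : |κ x * ((θ (T t x) - θ x) - (g₁ (T t x) - g₁ x))| ≤ (K + 1) * |t| := by
      have h3 := abs_sub (θ (T t x) - θ x) (g₁ (T t x) - g₁ x)
      have h4 := θL x t
      have h5 := g₁L x t
      have h6 := abs_nonneg t
      rw [abs_mul, abs_of_nonneg (κI x).1]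
      have h7 : |(θ (T t x) - θ x) - (g₁ (T t x) - g₁ x)| ≤ (K + 1) * |t| := by nlinarith
      have h8 := mul_le_mul (κI x).2 h7 (abs_nonneg _) zero_le_one
      linarith
    rw [e]
    refine (abs_add_le _ _).trans ?_
    rw [abs_mul, abs_of_pos η0]
    have h3 := (abs_add_le _ _).trans (add_le_add h1 h2)
    have h4 := mul_le_mul_of_nonneg_left h3 η0.le
    have h5 : η * (K * |t| + (K + 1) * |t|) = δ / 2 * |t| := by rw [← ηK]; ring
    have h6 := g₁L x t
    linarith
  · intro x hx
    simp only [κF x hx, g₁F x hx]; ring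
  · intro x
    have e : g₁ x + η * (κ x * (θ x - g₁ x)) - g x
      = (g₁ x - g x) + η * (κ x * (θ x - g₁ x)) := by ring
    rw [e]
    refine (abs_add_le _ _).trans ?_
    have h1 : |κ x * (θ x - g₁ x)| ≤ 1 := by
      rw [abs_mul, abs_of_nonneg (κI x).1]
      exact mul_le_one₀ (κI x).2 (abs_nonneg _) (dI x)
    rw [abs_mul, abs_of_pos η0]
    nlinarith [g₁g x]
  · rintro y m hy hκ hq hm ⟨c, hc⟩
    refine not_differentiableAt_abs_of_hasDerivAt hq (by simp [hT0, hy]) hm ?_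
    -- solving `g' = c` for `|q|` near time `0`, where `κ` does not vanish
    have hk : ∀ᶠ t in nhds (0:ℝ), κ (T t y) ≠ 0 := by
      have : ContinuousAt (fun t => κ (T t y)) 0 := (κc.comp (continuous_orbit hT y)).continuousAt
      exact this.eventually_ne (by simpa [hT0] using hκ.ne')
    have hd : DifferentiableAt ℝ (fun t => 2 * ((c - g₁ (T t y)) / (η * κ (T t y)) + g₁ (T t y)) - 1)
        0 := by
      refine DifferentiableAt.sub_const (DifferentiableAt.const_mul (DifferentiableAt.add
        (DifferentiableAt.div ?_ ?_ ?_) (g₁D y)) _) _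
      · exact (g₁D y).const_sub c
      · exact (κD y).const_mul η
      · simpa [hT0] using ⟨η0.ne', hκ.ne'⟩
    refine hd.congr_of_eventuallyEq ?_
    filter_upwards [hk] with t ht
    have h1 := hc t
    simp only [hθ] at h1
    have h2 : c - g₁ (T t y) = η * κ (T t y) * ((1 + |q (T t y)|) / 2 - g₁ (T t y)) := by
      rw [← h1]; ring
    rw [h2, mul_div_cancel_left₀ _ (mul_ne_zero η0.ne' ht)]
    ring

/-! ### Transversal crossings near a nonfixed point -/

/-- Near a nonfixed point `p` there are a weight `κ` vanishing at fixed points and a function `q`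
such that all orbits through a neighborhood of `p` cross `{q = 0}` transversally where `κ > 0`. -/
lemma exists_local_section (hT : Continuous fun q : ℝ × X => T q.1 q.2) (hT0 : ∀ x, T 0 x = x)
    (hTadd : ∀ s t x, T (s + t) x = T s (T t x)) {p : X} (hp : ¬ ∀ t : ℝ, T t p = p) :
    ∃ (κ q : X → ℝ) (K : ℝ), 0 ≤ K ∧ Continuous κ ∧ Continuous q ∧
      (∀ x, κ x ∈ Set.Icc (0:ℝ) 1) ∧ (∀ x, |q x| ≤ 1) ∧ OrbitLip T K κ ∧ OrbitLip T K q ∧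
      OrbitDiff T κ ∧ (∀ x, (∀ t, T t x = x) → κ x = 0) ∧
      ∀ᶠ x in nhds p, ∃ t m, q (T t x) = 0 ∧ 0 < κ (T t x) ∧
        HasDerivAt (fun s => q (T s (T t x))) m 0 ∧ m ≠ 0 := by
  obtain ⟨b, hb, hbp⟩ : ∃ b, 0 < b ∧ T b p ≠ p := by
    push Not at hp
    obtain ⟨t, ht⟩ := hp
    rcases lt_trichotomy t 0 with h | h | h
    · refine ⟨-t, by linarith, fun e => ht ?_⟩
      rw [← e, ← hTadd]; simp [hT0, e]
    · exact absurd (by rw [h, hT0]) ht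
    · exact ⟨t, h, ht⟩
  set φ : X → ℝ := fun x => min (dist x p) 1 with hφ
  have φc : Continuous φ := (continuous_id.dist continuous_const).min continuous_const
  have φI : ∀ x, φ x ∈ Set.Icc (0:ℝ) 1 := fun x =>
    ⟨le_min dist_nonneg zero_le_one, min_le_right _ _⟩
  set Q := flowAvg T b φ with hQ
  have Qc : Continuous Q := continuous_flowAvg hT b φc
  have QI : ∀ x, Q x ∈ Set.Icc (0:ℝ) 1 := flowAvg_mem_Icc hT hb φc φI
  have QL : OrbitLip T b⁻¹ Q := by
    refine orbitLip_flowAvg hT hT0 hTadd φc fun z => ?_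
    have h1 := φI z
    have h2 := φI (T b z)
    rw [abs_mul, abs_of_pos (inv_pos.2 hb)]
    refine mul_le_of_le_one_right (inv_pos.2 hb).le ?_
    rw [abs_le]
    constructor <;> linarith [h1.1, h1.2, h2.1, h2.2]
  set D : X → ℝ := fun x => b⁻¹ * (φ (T b x) - φ x) with hD
  have Dc : Continuous D := continuous_const.mul ((φc.comp (continuous_time hT b)).sub φc)
  have QD : ∀ x t, HasDerivAt (fun t => Q (T t x)) (D (T t x)) t :=
    flowAvg_hasDerivAt hT hTadd b φc
  have Dp : 0 < D p := by
    have : 0 < φ (T b p) := lt_min (dist_pos.2 hbp) one_pos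
    have h0 : φ p = 0 := by simp [hφ]
    simp only [hD, h0, sub_zero]
    positivity
  obtain ⟨c, hc⟩ : ∃ c, Q (T c p) ≠ Q p := by
    by_contra! hcon
    have h1 := QD p 0
    simp only [hcon, hT0] at h1
    exact Dp.ne' (h1.unique (hasDerivAt_const _ _))
  set κ : X → ℝ := fun x => (Q (T c x) - Q x) ^ 2 with hκ
  have κc : Continuous κ := ((Qc.comp (continuous_time hT c)).sub Qc).pow 2
  have comm : ∀ t x, T c (T t x) = T t (T c x) := fun t x => by
    rw [← hTadd, ← hTadd, add_comm]
  have κp : 0 < κ p := by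
    have := sub_ne_zero.2 hc
    simp only [hκ]; positivity
  have dI : ∀ x, |Q (T c x) - Q x| ≤ 1 := fun x => by
    rw [abs_le]
    constructor <;> linarith [(QI x).1, (QI x).2, (QI (T c x)).1, (QI (T c x)).2]
  have bi := inv_pos.2 hb
  refine ⟨κ, fun x => Q x - Q p, 4 * b⁻¹, by positivity, κc, Qc.sub continuous_const, ?_, ?_, ?_, ?_,
    ?_, ?_, ?_⟩
  · exact fun x => ⟨sq_nonneg _, by simpa [hκ] using dI x⟩
  · intro x
    rw [abs_le]
    constructor <;> linarith [(QI x).1, (QI x).2, (QI p).1, (QI p).2]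
  · intro x t
    have e : κ (T t x) - κ x = ((Q (T t (T c x)) - Q (T c x)) - (Q (T t x) - Q x)) *
        ((Q (T c (T t x)) - Q (T t x)) + (Q (T c x) - Q x)) := by
      simp only [hκ, comm]; ring
    rw [e, abs_mul]
    have h1 := (abs_sub (Q (T t (T c x)) - Q (T c x)) (Q (T t x) - Q x)).trans
      (add_le_add (QL (T c x) t) (QL x t))
    have h2 := (abs_add_le _ _).trans (add_le_add (dI (T t x)) (dI x))
    have := mul_le_mul h1 h2 (abs_nonneg _) (by positivity)
    linarith
  · intro x t
    have := QL x t
    have h2 := mul_nonneg bi.le (abs_nonneg t)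
    rw [sub_sub_sub_cancel_right]
    linarith
  · intro x
    have h1 := (((QD (T c x) 0).sub (QD x 0)).pow 2).differentiableAt
    simp only [hκ, comm]
    exact h1
  · intro x hx
    simp [hκ, hx]
  · -- a flow box around `p` on which both `D` and `κ` are positive
    have hU : ∀ᶠ z : ℝ × X in nhds (0, p), 0 < D (T z.1 z.2) ∧ 0 < κ (T z.1 z.2) := by
      have h1 : Continuous fun z : ℝ × X => D (T z.1 z.2) := Dc.comp hT
      have h2 : Continuous fun z : ℝ × X => κ (T z.1 z.2) := κc.comp hT
      exact (h1.continuousAt.eventually (lt_mem_nhds (by simpa [hT0] using Dp))).and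
        (h2.continuousAt.eventually (lt_mem_nhds (by simpa [hT0] using κp)))
    rw [nhds_prod_eq, Filter.eventually_prod_iff] at hU
    obtain ⟨P, hP, V, hV, hPV⟩ := hU
    obtain ⟨r, hr, hrP⟩ := Metric.nhds_basis_closedBall.eventually_iff.1 hP
    have hbox : ∀ t ∈ Set.Icc (-r) r, ∀ x, V x → 0 < D (T t x) ∧ 0 < κ (T t x) := by
      intro t ht x hx
      refine hPV (hrP ?_) hx
      rw [Metric.mem_closedBall, Real.dist_eq, sub_zero]
      exact abs_le.2 ht
    have hmono : StrictMonoOn (fun t => Q (T t p)) (Set.Icc (-r) r) := by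
      refine strictMonoOn_of_deriv_pos (convex_Icc _ _)
        (Qc.comp (continuous_orbit hT p)).continuousOn fun t ht => ?_
      rw [(QD p t).deriv]
      exact (hbox t (interior_subset ht) p hV.self_of_nhds).1
    have m0 : (0:ℝ) ∈ Set.Icc (-r) r := ⟨by linarith, hr.le⟩
    have hl : Q (T (-r) p) < Q p := by
      simpa [hT0] using hmono ⟨le_rfl, by linarith⟩ m0 (by linarith : -r < 0)
    have hrr : Q p < Q (T r p) := by
      simpa [hT0] using hmono m0 ⟨by linarith, le_rfl⟩ hr
    filter_upwards [hV,
      (Qc.comp (continuous_time hT (-r))).continuousAt.eventually (gt_mem_nhds hl),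
      (Qc.comp (continuous_time hT r)).continuousAt.eventually (lt_mem_nhds hrr)] with x hx h1 h2
    obtain ⟨t, ht, hqt⟩ := intermediate_value_Icc (by linarith : -r ≤ r)
      (Qc.comp (continuous_orbit hT x)).continuousOn ⟨le_of_lt h1, le_of_lt h2⟩
    refine ⟨t, D (T t x), sub_eq_zero.2 hqt, (hbox t ht x hx).2, ?_, (hbox t ht x hx).1.ne'⟩
    have := QD (T t x) 0
    rw [hT0] at this
    exact this.sub_const _

/-! ### Genericity in the space of equivariant maps -/

/-- The element of `CTh X T h` whose value at `x` is the function `t ↦ g (T t x)`. -/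
def liftCTh (hT : Continuous fun q : ℝ × X => T q.1 q.2)
    (hTadd : ∀ s t x, T (s + t) x = T s (T t x))
    (h : {x : X // ∀ t : ℝ, T t x = x} → ℝ) {g : X → ℝ}
    (gc : Continuous g) (gI : ∀ x, g x ∈ Set.Icc (0:ℝ) 1) (gL : OrbitLip T 1 g)
    (gF : ∀ x : {x : X // ∀ t : ℝ, T t x = x}, g x.1 = h x) : CTh X T h :=
  ⟨ContinuousMap.curry ⟨fun z : X × ℝ => g (T z.2 z.1), gc.comp (hT.comp continuous_swap)⟩, by
    refine ⟨fun x => ⟨LipschitzWith.of_dist_le_mul fun s t => ?_, fun t => gI _⟩,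
      fun s x t => ?_, fun x t => ?_⟩
    · have := gL (T t x) (s - t)
      rw [← hTadd, sub_add_cancel] at this
      simpa [Real.dist_eq] using this
    · change g (T t (T s x)) = g (T (t + s) x)
      rw [hTadd]
    · change g (T t x.1) = h x
      rw [x.2 t, gF]⟩

end Flow

/-- For a flow (X,T), an embedding h of F = Fix(X,T) into the constant
functions F_L of L(ℝ), and p ∈ X \ F, there is a closed neighborhood A of p such that
G(A) = {f ∈ C_{T,h}(X,L(ℝ)) : f(A) ∩ F_L = ∅} is open and dense in C_{T,h}(X,L(ℝ)). -/
theorem stmt14 (X : Type*) [MetricSpace X] [CompactSpace X]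
    (T : ℝ → X → X) (hT : Continuous fun q : ℝ × X => T q.1 q.2)
    (hT0 : ∀ x, T 0 x = x) (hTadd : ∀ s t x, T (s + t) x = T s (T t x))
    (h : {x : X // ∀ t : ℝ, T t x = x} → ℝ)
    (hh : Topology.IsEmbedding h) (hh1 : ∀ x, h x ∈ Set.Icc (0:ℝ) 1)
    (p : X) (hp : ¬ ∀ t : ℝ, T t p = p) :
    ∃ A : Set X, IsClosed A ∧ A ∈ nhds p ∧
      IsOpen {f : CTh X T h | ∀ x ∈ A, ¬ ∃ c : ℝ, ∀ t : ℝ, (f : C(X, C(ℝ, ℝ))) x t = c} ∧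
      Dense {f : CTh X T h | ∀ x ∈ A, ¬ ∃ c : ℝ, ∀ t : ℝ, (f : C(X, C(ℝ, ℝ))) x t = c} := by
  obtain ⟨κ, q, K, hK, κc, qc, κI, qI, κL, qL, κD, κF, hnear⟩ :=
    exists_local_section hT hT0 hTadd hp
  obtain ⟨A, hAp, hAc, hA⟩ := exists_mem_nhds_isClosed_subset hnear
  refine ⟨A, hAc, hAp, ?_, ?_⟩
  · have hcl : IsClosed {φ : C(ℝ, ℝ) | ∃ c : ℝ, ∀ t, φ t = c} := by
      have : {φ : C(ℝ, ℝ) | ∃ c : ℝ, ∀ t, φ t = c} = ⋂ t : ℝ, {φ | φ t = φ 0} := by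
        ext φ
        simp only [Set.mem_ofPred_eq, Set.mem_iInter]
        exact ⟨fun ⟨c, hc⟩ t => by rw [hc, hc], fun H => ⟨_, H⟩⟩
      rw [this]
      exact isClosed_iInter fun t => isClosed_eq
        (continuous_eval_const t) (continuous_eval_const 0)
    exact (ContinuousMap.isOpen_setOfPred_mapsTo hAc.isCompact hcl.isOpen_compl).preimage
      continuous_subtype_val
  · intro f
    obtain ⟨hf1, hf2, hf3⟩ := f.2
    set g : X → ℝ := fun x => f.1 x 0 with hg
    have gT : ∀ x t, g (T t x) = f.1 x t := fun x t => by simp only [hg, hf2, zero_add]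
    have gc : Continuous g := (continuous_eval_const 0).comp f.1.continuous
    have gI : ∀ x, g x ∈ Set.Icc (0:ℝ) 1 := fun x => (hf1 x).2 0
    have gL : OrbitLip T 1 g := fun x t => by
      rw [gT]
      simpa [Real.dist_eq] using (hf1 x).1.dist_le_mul t 0
    have hδ : ∀ n : ℕ, 0 < 1 / ((n:ℝ) + 2) ∧ 1 / ((n:ℝ) + 2) < 1 := fun n => by
      refine ⟨by positivity, ?_⟩
      rw [div_lt_one (by positivity)]
      have : (0:ℝ) ≤ n := n.cast_nonneg
      linarith
    choose g' g'c g'I g'L g'F g'g g'N using fun n : ℕ =>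
      exists_perturbation hT hT0 hTadd hK κc qc κI qI κL qL κD κF gc gI gL (hδ n).1 (hδ n).2
    have g'h : ∀ n, ∀ x : {x : X // ∀ t : ℝ, T t x = x}, g' n x.1 = h x := fun n x => by
      rw [g'F n x.1 x.2]; exact hf3 x 0
    refine mem_closure_of_tendsto (b := Filter.atTop)
      (f := fun n => liftCTh hT hTadd h (g'c n) (g'I n) (g'L n) (g'h n)) ?_
      (Filter.Eventually.of_forall fun n x hx => ?_)
    · rw [tendsto_subtype_rng]
      have hfc : f.1 = ContinuousMap.curry
          ⟨fun z : X × ℝ => g (T z.2 z.1), gc.comp (hT.comp continuous_swap)⟩ := by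
        ext x t
        exact (gT x t).symm
      rw [hfc]
      refine (ContinuousMap.continuous_curry.tendsto _).comp ?_
      refine ContinuousMap.tendsto_iff_tendstoLocallyUniformly.2
        (TendstoUniformly.tendstoLocallyUniformly ?_)
      rw [Metric.tendstoUniformly_iff]
      intro ε hε
      have hlim : Filter.Tendsto (fun n : ℕ => 3 * (1 / ((n:ℝ) + 2))) Filter.atTop (nhds 0) := by
        have := (tendsto_one_div_add_atTop_nhds_zero_nat (𝕜 := ℝ)).comp (Filter.tendsto_add_atTop_nat 1)
        have := this.const_mul 3
        rw [mul_zero] at this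
        refine this.congr fun n => ?_
        simp only [Function.comp, Nat.cast_add, Nat.cast_one]
        ring
      filter_upwards [hlim.eventually (gt_mem_nhds hε)] with n hn z
      rw [dist_comm, Real.dist_eq]
      exact (g'g n _).trans_lt hn
    · -- a constant function on the orbit of `x` is constant on the orbit of the crossing point
      rintro ⟨c, hc⟩
      obtain ⟨t, m, h1, h2, h3, h4⟩ := hA hx
      refine g'N n _ m h1 h2 h3 h4 ⟨c, fun s => ?_⟩
      rw [← hTadd]
      exact hc (s + t)
end

section
/- A flow (X,T) can be equivariantly topologically embedded in L(ℝ) if and only if its fixed point set Fix(X,T) can be topologically embedded in the unit interval [0,1]. -/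
namespace BebutovKakutani

open Set Filter Topology

/-! ### Time averages along a flow -/

section Averages

variable {X : Type*} [MetricSpace X] (φ : Flow ℝ X)

/-- `K`-Lipschitz continuity of `f` in the time parameter along every orbit of the flow. -/
def OrbitLipschitz (K : ℝ) (f : C(X, ℝ)) : Prop :=
  ∀ s x, |f (φ s x) - f x| ≤ K * |s|

lemma flow_comm (s t : ℝ) (x : X) : φ s (φ t x) = φ t (φ s x) := by
  rw [← φ.map_add, ← φ.map_add, add_comm]

lemma continuous_orbit (x : X) : Continuous fun t : ℝ => φ t x :=
  φ.continuous continuous_id continuous_const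

lemma continuous_along (f : C(X, ℝ)) (x : X) : Continuous fun t : ℝ => f (φ t x) :=
  f.continuous.comp (continuous_orbit φ x)

/-- The forward time average `x ↦ b⁻¹ ∫₀ᵇ f (φ s x) ds`. -/
noncomputable def flowAvg (b : ℝ) (f : C(X, ℝ)) : C(X, ℝ) where
  toFun x := b⁻¹ * ∫ s in (0 : ℝ)..b, f (φ s x)
  continuous_toFun := by
    refine continuous_const.mul
      (intervalIntegral.continuous_parametric_intervalIntegral_of_continuous' ?_ 0 b)
    exact f.continuous.comp (φ.continuous continuous_snd continuous_fst)

lemma flowAvg_apply (b : ℝ) (f : C(X, ℝ)) (x : X) :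
    flowAvg φ b f x = b⁻¹ * ∫ s in (0 : ℝ)..b, f (φ s x) := rfl

lemma abs_avg_sub_avg_le {b C : ℝ} (hb : 0 < b) {F G : ℝ → ℝ} (hF : Continuous F)
    (hG : Continuous G) (h : ∀ r ∈ Icc 0 b, |F r - G r| ≤ C) :
    |b⁻¹ * (∫ r in (0 : ℝ)..b, F r) - b⁻¹ * ∫ r in (0 : ℝ)..b, G r| ≤ C := by
  rw [← mul_sub, ← intervalIntegral.integral_sub (hF.intervalIntegrable _ _)
    (hG.intervalIntegrable _ _), abs_mul, abs_of_pos (inv_pos.2 hb)]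
  have : ‖∫ r in (0 : ℝ)..b, (F r - G r)‖ ≤ C * |b - 0| := by
    refine intervalIntegral.norm_integral_le_of_norm_le_const fun r hr => ?_
    rw [uIoc_of_le hb.le] at hr
    exact h r ⟨hr.1.le, hr.2⟩
  rw [Real.norm_eq_abs, sub_zero, abs_of_pos hb] at this
  calc _ ≤ b⁻¹ * (C * b) := by gcongr
    _ = C := by field_simp

lemma avg_const {b : ℝ} (hb : 0 < b) (c : ℝ) : b⁻¹ * (∫ _ in (0 : ℝ)..b, c) = c := by
  simp [hb.ne']

lemma abs_flowAvg_sub_le {b C m : ℝ} (hb : 0 < b) {f : C(X, ℝ)} {x : X}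
    (h : ∀ r ∈ Icc 0 b, |f (φ r x) - m| ≤ C) : |flowAvg φ b f x - m| ≤ C := by
  have := abs_avg_sub_avg_le hb (continuous_along φ f x) (continuous_const (y := m)) h
  rwa [avg_const hb] at this

lemma flowAvg_mem_Icc {b lo hi : ℝ} (hb : 0 < b) {f : C(X, ℝ)}
    (h : ∀ x, f x ∈ Icc lo hi) (x : X) : flowAvg φ b f x ∈ Icc lo hi := by
  have := abs_flowAvg_sub_le φ hb (f := f) (x := x) (m := (lo + hi) / 2) (C := (hi - lo) / 2)
    fun r _ => by
      have := h (φ r x)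
      rw [abs_le]; constructor <;> linarith [this.1, this.2]
  rw [abs_le] at this
  constructor <;> linarith [this.1, this.2]

lemma flowAvg_fixed {b : ℝ} (hb : 0 < b) (f : C(X, ℝ)) {x : X} (hx : ∀ t, φ t x = x) :
    flowAvg φ b f x = f x := by
  rw [flowAvg_apply]
  simp only [hx]
  exact avg_const hb _

lemma abs_flowAvg_sub_self_le {b K : ℝ} (hb : 0 < b) (hK : 0 ≤ K) {f : C(X, ℝ)}
    (h : OrbitLipschitz φ K f) (x : X) : |flowAvg φ b f x - f x| ≤ K * b := by
  refine abs_flowAvg_sub_le φ hb fun r hr => (h r x).trans ?_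
  rw [abs_of_nonneg hr.1]
  exact mul_le_mul_of_nonneg_left hr.2 hK

lemma OrbitLipschitz.flowAvg {b K : ℝ} (hb : 0 < b) {f : C(X, ℝ)}
    (h : OrbitLipschitz φ K f) : OrbitLipschitz φ K (flowAvg φ b f) := fun s x => by
  refine abs_avg_sub_avg_le hb (continuous_along φ f _) (continuous_along φ f _) fun r _ => ?_
  rw [flow_comm]
  exact h s _

/-- Averaging gains one derivative in the time direction. -/
lemma hasDerivAt_flowAvg (b : ℝ) (f : C(X, ℝ)) (x : X) (t : ℝ) :
    HasDerivAt (fun t => flowAvg φ b f (φ t x))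
      (b⁻¹ * (f (φ b (φ t x)) - f (φ t x))) t := by
  set F : ℝ → ℝ := fun s => f (φ s x) with hF
  have hFc : Continuous F := continuous_along φ f x
  have key : (fun t => flowAvg φ b f (φ t x)) =
      fun t => b⁻¹ * ((∫ s in (0 : ℝ)..(t + b), F s) - ∫ s in (0 : ℝ)..t, F s) := by
    funext t
    rw [flowAvg_apply, intervalIntegral.integral_interval_sub_left (hFc.intervalIntegrable _ _)
      (hFc.intervalIntegrable _ _)]
    congr 1
    have := intervalIntegral.integral_comp_add_right (a := 0) (b := b) F t
    rw [zero_add, add_comm b t] at this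
    rw [← this]
    simp only [hF, φ.map_add]
  rw [key, ← φ.map_add, add_comm b t]
  have h1 : HasDerivAt (fun t => ∫ s in (0 : ℝ)..t, F s) (F t) t :=
    intervalIntegral.integral_hasDerivAt_right (hFc.intervalIntegrable _ _)
      (hFc.stronglyMeasurableAtFilter _ _) hFc.continuousAt
  have h2 : HasDerivAt (fun t => ∫ s in (0 : ℝ)..t, F s) (F (t + b)) (t + b) :=
    intervalIntegral.integral_hasDerivAt_right (hFc.intervalIntegrable _ _)
      (hFc.stronglyMeasurableAtFilter _ _) hFc.continuousAt
  exact ((h2.comp_add_const t b).sub h1).const_mul _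

lemma orbitLipschitz_flowAvg {b M : ℝ} (hb : 0 < b) {f : C(X, ℝ)} (h : ∀ x, |f x| ≤ M) :
    OrbitLipschitz φ (2 * M / b) (flowAvg φ b f) := fun s x => by
  have := Convex.norm_image_sub_le_of_norm_hasDerivWithin_le
    (f := fun t => flowAvg φ b f (φ t x)) (s := univ) (C := 2 * M / b) (x := 0) (y := s)
    (fun t _ => (hasDerivAt_flowAvg φ b f x t).hasDerivWithinAt) (fun t _ => by
      rw [Real.norm_eq_abs, abs_mul, abs_of_pos (inv_pos.2 hb), inv_mul_eq_div]
      gcongr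
      have h1 := abs_le.1 (h (φ b (φ t x)))
      have h2 := abs_le.1 (h (φ t x))
      rw [abs_le]; constructor <;> linarith [h1.1, h1.2, h2.1, h2.2])
    convex_univ (mem_univ _) (mem_univ _)
  simpa using this

lemma exists_abs_le [CompactSpace X] (f : C(X, ℝ)) : ∃ M, 0 < M ∧ ∀ x, |f x| ≤ M :=
  ⟨‖f‖ + 1, by positivity, fun x => (f.norm_coe_le_norm x).trans (by linarith)⟩

end Averages

/-- If `u` vanishes at `t₀` with nonzero derivative and `v` is differentiable and nonzero there,
then the corner of `|u|` survives in the product `|u| * v`. -/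
lemma not_differentiableAt_abs_mul {u v : ℝ → ℝ} {t₀ d : ℝ} (hu : HasDerivAt u d t₀)
    (hd : d ≠ 0) (hu0 : u t₀ = 0) (hv : DifferentiableAt ℝ v t₀) (hv0 : v t₀ ≠ 0) :
    ¬ DifferentiableAt ℝ (fun t => |u t| * v t) t₀ := by
  intro h
  have hne : ∀ᶠ t in 𝓝 t₀, v t ≠ 0 := hv.continuousAt.eventually_ne hv0
  have habs : DifferentiableAt ℝ (fun t => |u t|) t₀ := by
    refine (h.div hv hv0).congr_of_eventuallyEq ?_
    filter_upwards [hne] with t ht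
    simp [ht]
  have hmin : IsLocalMin (fun t => |u t|) t₀ :=
    Eventually.of_forall fun t => by simp [hu0]
  have h0 : HasDerivAt (fun t => |u t|) 0 t₀ := by
    have := habs.hasDerivAt
    rwa [hmin.deriv_eq_zero] at this
  have h1 : HasDerivAt u 0 t₀ := by
    rw [hasDerivAt_iff_isLittleO] at h0 ⊢
    refine h0.norm_left.congr_left (fun t => ?_) |>.of_norm_left
    simp [hu0]
  exact hd (hu.unique h1)

/-! ### Functions with a corner along nearby orbits -/

section Perturbation

variable {X : Type*} [MetricSpace X] (φ : Flow ℝ X)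

/-- A point of an open set `V` has a neighbourhood whose points all stay in `V` for a common
time `a`, by joint continuity of the flow at time zero. -/
lemma exists_time_nhds {V : Set X} (hV : IsOpen V) {x₀ : X} (hx : x₀ ∈ V) :
    ∃ a > 0, ∀ᶠ x in 𝓝 x₀, ∀ t : ℝ, |t| ≤ a → φ t x ∈ V := by
  have hc : Continuous fun q : ℝ × X => φ q.1 q.2 := φ.continuous continuous_fst continuous_snd
  have h : ∀ᶠ q in 𝓝 ((0 : ℝ), x₀), φ q.1 q.2 ∈ V :=
    hc.continuousAt.eventually (hV.mem_nhds (by simpa using hx))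
  rw [nhds_prod_eq] at h
  obtain ⟨p, hp, q, hq, hpq⟩ := eventually_prod_iff.1 h
  obtain ⟨a, ha, hap⟩ := Metric.nhds_basis_closedBall.eventually_iff.1 hp
  refine ⟨a, ha, hq.mono fun x hx t ht => hpq (hap ?_) hx⟩
  simpa using ht

lemma orbitLipschitz_abs_mul {K L M N : ℝ} {u v : C(X, ℝ)}
    (hu : OrbitLipschitz φ K u) (hv : OrbitLipschitz φ L v) (hM : ∀ x, |u x| ≤ M)
    (hvN : ∀ x, |v x| ≤ N) : OrbitLipschitz φ (M * L + K * N) (|u| * v) := fun s x => by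
  simp only [ContinuousMap.mul_apply, ContinuousMap.abs_apply]
  have h1 : |u (φ s x)| * v (φ s x) - |u x| * v x =
    |u (φ s x)| * (v (φ s x) - v x) + (|u (φ s x)| - |u x|) * v x := by ring
  rw [h1]
  refine (abs_add_le _ _).trans ?_
  rw [abs_mul, abs_mul, abs_abs]
  have h2 := (abs_abs_sub_abs_le (u (φ s x)) (u x)).trans (hu s x)
  have h3 := hv s x
  have h4 := hM (φ s x)
  have h5 := hvN x
  have : |u (φ s x)| * |v (φ s x) - v x| ≤ M * (L * |s|) :=
    mul_le_mul h4 h3 (abs_nonneg _) ((abs_nonneg _).trans h4)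
  have : |(|u (φ s x)| - |u x|)| * |v x| ≤ (K * |s|) * N :=
    mul_le_mul h2 h5 (abs_nonneg _) ((abs_nonneg _).trans h2)
  linarith

lemma isClosed_fixed : IsClosed {x : X | ∀ t, φ t x = x} := by
  rw [ofPred_forall]
  exact isClosed_iInter fun t =>
    isClosed_eq (φ.continuous continuous_const continuous_id) continuous_id

/-- Given a non-fixed point `x₀` and another point `y₀`, some function `q`, Lipschitz along orbits
and zero at fixed points, has a corner along the orbit of every point near `x₀`, at a time around
which it vanishes along the orbit of every point near `y₀`. It is `|u| * v`, where `u` is a local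
time coordinate vanishing at `x₀` and `v` is a cutoff near `x₀`, both differentiable along
orbits. -/
lemma exists_corner [CompactSpace X] {x₀ y₀ : X} (hx : ¬ ∀ t, φ t x₀ = x₀) (hxy : x₀ ≠ y₀) :
    ∃ q : C(X, ℝ), (∃ K, 0 < K ∧ OrbitLipschitz φ K q) ∧ (∀ x, (∀ t, φ t x = x) → q x = 0) ∧
      ∃ r > 0, ∀ x ∈ Metric.closedBall x₀ r, ∀ y ∈ Metric.closedBall y₀ r, ∃ t₀ : ℝ,
        (∀ᶠ t in 𝓝 t₀, q (φ t y) = 0) ∧ ¬ DifferentiableAt ℝ (fun t => q (φ t x)) t₀ := by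
  -- the `ρ`-ball around `x₀` avoids the fixed points and the orbit segments over `[-a₀, a₀]` of
  -- the points near `y₀`
  obtain ⟨ρ₁, hρ₁, hF⟩ := Metric.isOpen_iff.1 (isClosed_fixed φ).isOpen_compl x₀ hx
  set D := dist y₀ x₀ with hD
  have hDpos : 0 < D := dist_pos.2 hxy.symm
  obtain ⟨a₀, ha₀, hB⟩ := exists_time_nhds φ (V := {y | D / 2 < dist y x₀})
    (isOpen_lt continuous_const (by fun_prop)) (x₀ := y₀) (by simp only [mem_ofPred_eq]; linarith)
  set ρ := min ρ₁ (D / 2) with hρ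
  have hρpos : 0 < ρ := lt_min hρ₁ (by linarith)
  set a := a₀ / 2 with ha
  have hapos : 0 < a := by positivity
  let κ : C(X, ℝ) := ⟨fun x => max 0 (ρ - dist x x₀), by fun_prop⟩
  have hκ0 : ∀ x, ρ ≤ dist x x₀ → κ x = 0 := fun x h => max_eq_left (by linarith)
  let v := flowAvg φ a κ
  have hvfix : ∀ x, (∀ t, φ t x = x) → v x = 0 := fun x h => by
    rw [show v x = κ x from flowAvg_fixed φ hapos κ h]
    refine hκ0 _ (not_lt.1 fun hlt => ?_)
    exact hF (Metric.mem_ball.2 (hlt.trans_le (min_le_left _ _))) h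
  have hvx₀ : 0 < v x₀ := by
    rw [show v x₀ = _ from flowAvg_apply φ a κ x₀]
    refine mul_pos (inv_pos.2 hapos) ?_
    refine intervalIntegral.integral_pos hapos (continuous_along φ κ x₀).continuousOn
      (fun r _ => le_max_left _ _) ⟨0, by simp [hapos.le], ?_⟩
    simp [κ, hρpos]
  have hvy : ∀ᶠ y in 𝓝 y₀, ∀ t, |t| < a → v (φ t y) = 0 := by
    filter_upwards [hB] with y hy t ht
    have : |v (φ t y) - 0| ≤ 0 := by
      refine abs_flowAvg_sub_le φ hapos fun r hr => ?_
      rw [← φ.map_add, hκ0, sub_zero, abs_zero]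
      refine (min_le_right _ _).trans (le_of_lt (hy (r + t) ?_))
      have := abs_lt.1 ht
      rw [abs_le]; constructor <;> linarith [hr.1, hr.2]
    simpa using this
  -- the average of `dist · x₀` over time `b` has derivative `b⁻¹ * dist (φ b x₀) x₀ > 0` at `x₀`,
  -- so, normalised to vanish at `x₀`, it is a local time coordinate
  obtain ⟨b, hb, hbx⟩ : ∃ b > 0, φ b x₀ ≠ x₀ := by
    by_contra! hcon
    refine hx fun t => ?_
    rcases lt_trichotomy t 0 with h | h | h
    · have := hcon (-t) (by linarith)
      nth_rewrite 1 [← this]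
      rw [← φ.map_add]; simp
    · simp [h]
    · exact hcon t h
  let θ : C(X, ℝ) := ⟨fun x => dist x x₀, by fun_prop⟩
  let u : C(X, ℝ) := flowAvg φ b θ - ContinuousMap.const X (flowAvg φ b θ x₀)
  let p : C(X, ℝ) := ⟨fun x => b⁻¹ * (θ (φ b x) - θ x), by
    have : Continuous fun x => φ b x := φ.continuous continuous_const continuous_id
    fun_prop⟩
  have hu' : ∀ x t, HasDerivAt (fun t => u (φ t x)) (p (φ t x)) t := fun x t =>
    (hasDerivAt_flowAvg φ b θ x t).sub_const _
  have hp0 : 0 < p x₀ := by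
    have : 0 < dist (φ b x₀) x₀ := dist_pos.2 hbx
    simp only [p, θ, ContinuousMap.coe_mk, dist_self, sub_zero]
    positivity
  have hu0 : u x₀ = 0 := by simp [u]
  have hVo : IsOpen {x | 0 < p x ∧ 0 < v x} :=
    (isOpen_lt continuous_const p.continuous).inter (isOpen_lt continuous_const v.continuous)
  obtain ⟨a₁', ha₁', hA'⟩ := exists_time_nhds φ hVo (x₀ := x₀) ⟨hp0, hvx₀⟩
  set a₁ := min a₁' (a / 2) with ha₁
  have ha₁pos : 0 < a₁ := lt_min ha₁' (by linarith)
  have ha₁a : a₁ < a := (min_le_right _ _).trans_lt (by linarith)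
  have hA : ∀ᶠ x in 𝓝 x₀, ∀ t : ℝ, |t| ≤ a₁ → 0 < p (φ t x) ∧ 0 < v (φ t x) :=
    hA'.mono fun x h t ht => h t (ht.trans (min_le_left _ _))
  have hmono : StrictMonoOn (fun t => u (φ t x₀)) (Icc (-a₁) a₁) := by
    refine strictMonoOn_of_deriv_pos (convex_Icc _ _) (continuous_along φ u x₀).continuousOn ?_
    intro t ht
    rw [interior_Icc] at ht
    rw [(hu' x₀ t).deriv]
    exact (hA.self_of_nhds t (abs_le.2 ⟨ht.1.le, ht.2.le⟩)).1
  have hpos : 0 < u (φ a₁ x₀) := by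
    have := hmono (a := 0) (b := a₁) ⟨by linarith, by linarith⟩ ⟨by linarith, le_rfl⟩ ha₁pos
    simpa [hu0] using this
  have hneg : u (φ (-a₁) x₀) < 0 := by
    have := hmono (a := -a₁) (b := 0) ⟨le_rfl, by linarith⟩ ⟨by linarith, by linarith⟩
      (by linarith)
    simpa [hu0] using this
  have hcont : ∀ t, Continuous fun x => u (φ t x) := fun t =>
    u.continuous.comp (φ.continuous continuous_const continuous_id)
  have hpos' : ∀ᶠ x in 𝓝 x₀, 0 < u (φ a₁ x) :=
    (hcont a₁).continuousAt.eventually (lt_mem_nhds hpos)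
  have hneg' : ∀ᶠ x in 𝓝 x₀, u (φ (-a₁) x) < 0 :=
    (hcont (-a₁)).continuousAt.eventually (gt_mem_nhds hneg)
  obtain ⟨r₁, hr₁, hAr⟩ :=
    Metric.nhds_basis_closedBall.eventually_iff.1 (hA.and (hpos'.and hneg'))
  obtain ⟨r₂, hr₂, hBr⟩ := Metric.nhds_basis_closedBall.eventually_iff.1 hvy
  obtain ⟨M, hM, huM⟩ := exists_abs_le u
  obtain ⟨N, hN, hvN⟩ := exists_abs_le v
  obtain ⟨M', hM', hθM⟩ := exists_abs_le θ
  obtain ⟨N', hN', hκN⟩ := exists_abs_le κ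
  have huLip : OrbitLipschitz φ (2 * M' / b) u := fun s x => by
    have := orbitLipschitz_flowAvg φ hb hθM s x
    simpa [u] using this
  have hvLip : OrbitLipschitz φ (2 * N' / a) v := orbitLipschitz_flowAvg φ hapos hκN
  refine ⟨|u| * v, ⟨_, ?_, orbitLipschitz_abs_mul φ huLip hvLip huM hvN⟩, ?_,
    min r₁ r₂, lt_min hr₁ hr₂, ?_⟩
  · positivity
  · intro x h
    simp [hvfix x h]
  · intro x hxr y hyr
    obtain ⟨hAx, hpx, hnx⟩ := hAr (Metric.closedBall_subset_closedBall (min_le_left _ _) hxr)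
    have hBy := hBr (Metric.closedBall_subset_closedBall (min_le_right _ _) hyr)
    obtain ⟨t₀, ht₀, hut₀⟩ := intermediate_value_Icc (by linarith : -a₁ ≤ a₁)
      (continuous_along φ u x).continuousOn ⟨hnx.le, hpx.le⟩
    have ht₀' : |t₀| ≤ a₁ := abs_le.2 ht₀
    obtain ⟨hp, hv⟩ := hAx t₀ ht₀'
    refine ⟨t₀, ?_, ?_⟩
    · filter_upwards [continuous_abs.continuousAt.eventually
        (gt_mem_nhds (ht₀'.trans_lt ha₁a))] with t ht
      simp [hBy t ht]
    · exact not_differentiableAt_abs_mul (hu' x t₀) hp.ne' hut₀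
        (hasDerivAt_flowAvg φ a κ x t₀).differentiableAt hv.ne'

end Perturbation

/-! ### The Baire category argument -/

section Category

variable {X : Type*} [MetricSpace X] (φ : Flow ℝ X)

/-- The functions `f : X → [0,1]` that are `1`-Lipschitz along orbits and agree with `g` on the
fixed points. They correspond to the equivariant maps `X → L(ℝ)` with prescribed restriction to
the fixed point set. -/
def admissible (g : C(X, ℝ)) : Set C(X, ℝ) :=
  {f | OrbitLipschitz φ 1 f ∧ (∀ x, f x ∈ Icc (0 : ℝ) 1) ∧ ∀ x, (∀ t, φ t x = x) → f x = g x}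

lemma isClosed_admissible (g : C(X, ℝ)) : IsClosed (admissible φ g) := by
  have hev : ∀ x : X, Continuous fun f : C(X, ℝ) => f x := fun x => continuous_eval_const x
  have h1 : IsClosed {f : C(X, ℝ) | ∀ s x, |f (φ s x) - f x| ≤ 1 * |s|} := by
    simp only [Set.ofPred_forall]
    exact isClosed_iInter fun s => isClosed_iInter fun x =>
      isClosed_le ((hev _).sub (hev _)).abs continuous_const
  have h2 : IsClosed {f : C(X, ℝ) | ∀ x, f x ∈ Icc (0 : ℝ) 1} := by
    simp only [Set.ofPred_forall]
    exact isClosed_iInter fun x => isClosed_Icc.preimage (hev x)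
  have h3 : IsClosed {f : C(X, ℝ) | ∀ x, (∀ t, φ t x = x) → f x = g x} := by
    simp only [Set.ofPred_forall]
    exact isClosed_iInter fun x => isClosed_iInter fun _ => isClosed_eq (hev x) continuous_const
  exact h1.inter (h2.inter h3)

/-- The functions separating the orbit map of every point of `A` from that of every point
of `B`. -/
def separating (A B : Set X) : Set C(X, ℝ) :=
  {f | ∀ x ∈ A, ∀ y ∈ B, ∃ t, f (φ t x) ≠ f (φ t y)}

lemma isOpen_separating [CompactSpace X] {A B : Set X} (hA : IsClosed A) (hB : IsClosed B) :
    IsOpen (separating φ A B) := by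
  have hcl : IsClosed {w : C(X, ℝ) × (X × X) |
      w.2.1 ∈ A ∧ w.2.2 ∈ B ∧ ∀ t, w.1 (φ t w.2.1) = w.1 (φ t w.2.2)} := by
    have h : IsClosed {w : C(X, ℝ) × (X × X) | ∀ t, w.1 (φ t w.2.1) = w.1 (φ t w.2.2)} := by
      simp only [Set.ofPred_forall]
      exact isClosed_iInter fun t => isClosed_eq
        (continuous_fst.eval (φ.continuous continuous_const (by fun_prop)))
        (continuous_fst.eval (φ.continuous continuous_const (by fun_prop)))
    exact (hA.preimage (continuous_fst.comp continuous_snd)).inter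
      ((hB.preimage (continuous_snd.comp continuous_snd)).inter h)
  have := isClosedMap_fst_of_compactSpace _ hcl
  rw [← isClosed_compl_iff]
  convert this using 1
  ext f
  simp only [separating, mem_compl_iff, mem_ofPred_eq, mem_image, Prod.exists]
  push Not
  constructor
  · rintro ⟨x, hx, y, hy, h⟩
    exact ⟨f, x, y, ⟨hx, hy, h⟩, rfl⟩
  · rintro ⟨f', x, y, ⟨hx, hy, h⟩, rfl⟩
    exact ⟨x, hx, y, hy, h⟩

/-- Density step. Moving `f` slightly towards `g` creates slack in the Lipschitz constant and in
the range without changing the values at fixed points, averaging makes it differentiable along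
orbits, and a small multiple of the corner function `q` then separates. -/
lemma exists_separating_near [CompactSpace X] {g : C(X, ℝ)} (hgL : OrbitLipschitz φ (1 / 2) g)
    (hgI : ∀ x, g x ∈ Icc (1 / 4 : ℝ) (3 / 4)) {q : C(X, ℝ)} {K : ℝ} (hK : 0 < K)
    (hqK : OrbitLipschitz φ K q) (hq0 : ∀ x, (∀ t, φ t x = x) → q x = 0) {A B : Set X}
    (hq : ∀ x ∈ A, ∀ y ∈ B, ∃ t₀ : ℝ,
      (∀ᶠ t in 𝓝 t₀, q (φ t y) = 0) ∧ ¬ DifferentiableAt ℝ (fun t => q (φ t x)) t₀)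
    {f : C(X, ℝ)} (hf : f ∈ admissible φ g) {ε : ℝ} (hε : 0 < ε) :
    ∃ f' ∈ admissible φ g, dist f' f < ε ∧ f' ∈ separating φ A B := by
  obtain ⟨hfL, hfI, hfg⟩ := hf
  obtain ⟨M, hM, hqM⟩ := exists_abs_le q
  set δ := min 1 (ε / 4) with hδ
  have hδpos : 0 < δ := lt_min one_pos (by linarith)
  have hδ1 : δ ≤ 1 := min_le_left _ _
  have hδε : δ ≤ ε / 4 := min_le_right _ _
  set c := δ / (4 * (M + K)) with hc
  have hcpos : 0 < c := by positivity
  have hcMK : c * M + c * K = δ / 4 := by rw [hc]; field_simp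
  have hcM : c * M ≤ δ / 4 := by nlinarith [mul_pos hcpos hK]
  have hcK : c * K ≤ δ / 4 := by nlinarith [mul_pos hcpos hM]
  let f₁ : C(X, ℝ) := (1 - δ) • f + δ • g
  have hf₁ : ∀ x, f₁ x = (1 - δ) * f x + δ * g x := fun x => rfl
  have hf₁L : OrbitLipschitz φ (1 - δ / 2) f₁ := fun s x => by
    rw [hf₁, hf₁, show (1 - δ) * f (φ s x) + δ * g (φ s x) - ((1 - δ) * f x + δ * g x) =
      (1 - δ) * (f (φ s x) - f x) + δ * (g (φ s x) - g x) by ring]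
    refine (abs_add_le _ _).trans ?_
    rw [abs_mul, abs_mul, abs_of_nonneg (sub_nonneg.2 hδ1), abs_of_pos hδpos]
    have h1 := mul_le_mul_of_nonneg_left (hfL s x) (sub_nonneg.2 hδ1)
    have h2 := mul_le_mul_of_nonneg_left (hgL s x) hδpos.le
    linarith
  have hf₁I : ∀ x, f₁ x ∈ Icc (δ / 4) (1 - δ / 4) := fun x => by
    rw [hf₁]
    have h1 := mul_nonneg (sub_nonneg.2 hδ1) (hfI x).1
    have h2 := mul_nonneg (sub_nonneg.2 hδ1) (sub_nonneg.2 (hfI x).2)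
    have h3 := mul_nonneg hδpos.le (sub_nonneg.2 (hgI x).1)
    have h4 := mul_nonneg hδpos.le (sub_nonneg.2 (hgI x).2)
    constructor <;> nlinarith
  have hb : 0 < ε / 4 := by linarith
  let f₂ := flowAvg φ (ε / 4) f₁
  have hf₂L : OrbitLipschitz φ (1 - δ / 2) f₂ := hf₁L.flowAvg φ hb
  have hf₂I : ∀ x, f₂ x ∈ Icc (δ / 4) (1 - δ / 4) := flowAvg_mem_Icc φ hb hf₁I
  let f₃ : C(X, ℝ) := f₂ + c • q
  have hf₃ : ∀ x, f₃ x = f₂ x + c * q x := fun x => rfl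
  have hcq : ∀ x, |c * q x| ≤ δ / 4 := fun x => by
    rw [abs_mul, abs_of_pos hcpos]
    exact (mul_le_mul_of_nonneg_left (hqM x) hcpos.le).trans hcM
  refine ⟨f₃, ⟨fun s x => ?_, fun x => ?_, fun x hx => ?_⟩, ?_, ?_⟩
  · rw [hf₃, hf₃, show f₂ (φ s x) + c * q (φ s x) - (f₂ x + c * q x) =
      (f₂ (φ s x) - f₂ x) + c * (q (φ s x) - q x) by ring]
    refine (abs_add_le _ _).trans ?_
    rw [abs_mul, abs_of_pos hcpos]
    have h1 := hf₂L s x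
    have h2 := mul_le_mul_of_nonneg_left (hqK s x) hcpos.le
    have h3 := mul_le_mul_of_nonneg_right hcK (abs_nonneg s)
    have h4 := mul_nonneg hδpos.le (abs_nonneg s)
    linarith
  · rw [hf₃]
    have h1 := hf₂I x
    have h2 := abs_le.1 (hcq x)
    constructor <;> linarith [h1.1, h1.2, h2.1, h2.2]
  · rw [hf₃, hq0 x hx, show f₂ x = f₁ x from flowAvg_fixed φ hb f₁ hx, hf₁, hfg x hx]
    ring
  · refine (ContinuousMap.dist_le (by positivity : 0 ≤ 3 * ε / 4)).2 (fun x => ?_) |>.trans_lt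
      (by linarith)
    rw [Real.dist_eq, hf₃, show f₂ x + c * q x - f x =
      (f₂ x - f₁ x) + c * q x + δ * (g x - f x) by rw [hf₁]; ring]
    refine (abs_add_le _ _).trans ((add_le_add_left (abs_add_le _ _) _).trans ?_)
    have h1 : |f₂ x - f₁ x| ≤ (1 - δ / 2) * (ε / 4) :=
      abs_flowAvg_sub_self_le φ hb (by linarith) hf₁L x
    have h2 : |δ * (g x - f x)| ≤ δ := by
      rw [abs_mul, abs_of_pos hδpos]
      have : |g x - f x| ≤ 1 := by
        rw [abs_le]; constructor <;> linarith [(hgI x).1, (hgI x).2, (hfI x).1, (hfI x).2]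
      nlinarith
    have h3 := hcq x
    nlinarith [mul_pos hδpos hε]
  · intro x hx y hy
    by_contra! hcon
    -- equal orbit maps would express `q` along the orbit of `x`, near `t₀`, through `f₂`, which
    -- is differentiable along orbits
    obtain ⟨t₀, hy0, hnd⟩ := hq x hx y hy
    refine hnd ?_
    have hd : ∀ z, DifferentiableAt ℝ (fun t => f₂ (φ t z)) t₀ := fun z =>
      (hasDerivAt_flowAvg φ _ f₁ z t₀).differentiableAt
    refine (((hd y).sub (hd x)).const_mul c⁻¹).congr_of_eventuallyEq ?_
    filter_upwards [hy0] with t ht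
    have h := hcon t
    rw [hf₃, hf₃, ht] at h
    simp only [Pi.sub_apply]
    field_simp
    linarith

/-- A generic admissible function separates the orbit map of any non-fixed point from that of every
other point. -/
lemma exists_generic [CompactSpace X] {g : C(X, ℝ)} (hgL : OrbitLipschitz φ (1 / 2) g)
    (hgI : ∀ x, g x ∈ Icc (1 / 4 : ℝ) (3 / 4)) :
    ∃ f ∈ admissible φ g, ∀ x y, x ≠ y → (¬ ∀ t, φ t x = x) →
      ∃ t, f (φ t x) ≠ f (φ t y) := by
  let P : Set (X × X) := {w | (¬ ∀ t, φ t w.1 = w.1) ∧ w.1 ≠ w.2}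
  have hcorner : ∀ w : X × X, ∃ r > 0, w ∈ P →
      ∃ q : C(X, ℝ), (∃ K, 0 < K ∧ OrbitLipschitz φ K q) ∧
      (∀ x, (∀ t, φ t x = x) → q x = 0) ∧
      ∀ x ∈ Metric.closedBall w.1 r, ∀ y ∈ Metric.closedBall w.2 r, ∃ t₀ : ℝ,
        (∀ᶠ t in 𝓝 t₀, q (φ t y) = 0) ∧ ¬ DifferentiableAt ℝ (fun t => q (φ t x)) t₀ := by
    intro w
    by_cases hw : w ∈ P
    · obtain ⟨q, hqK, hq0, r, hr, hq⟩ := exists_corner φ hw.1 hw.2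
      exact ⟨r, hr, fun _ => ⟨q, hqK, hq0, hq⟩⟩
    · exact ⟨1, one_pos, fun h => absurd h hw⟩
  choose r hr hq using hcorner
  obtain ⟨S, hSP, hSc, hS⟩ := TopologicalSpace.countable_cover_nhdsWithin (s := P)
    (f := fun w => Metric.closedBall w.1 (r w) ×ˢ Metric.closedBall w.2 (r w))
    fun w _ => mem_nhdsWithin_of_mem_nhds
      (prod_mem_nhds (Metric.closedBall_mem_nhds _ (hr w)) (Metric.closedBall_mem_nhds _ (hr w)))
  have : Countable S := hSc.to_subtype
  have : CompleteSpace (admissible φ g) := (isClosed_admissible φ g).completeSpace_coe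
  have hne : Nonempty (admissible φ g) := ⟨⟨g, fun s x => (hgL s x).trans (by
      linarith [abs_nonneg s]), fun x => ⟨by linarith [(hgI x).1], by linarith [(hgI x).2]⟩,
      fun _ _ => rfl⟩⟩
  let O : S → Set (admissible φ g) := fun w => Subtype.val ⁻¹'
    separating φ (Metric.closedBall w.1.1 (r w)) (Metric.closedBall w.1.2 (r w))
  have hO : ∀ w, IsOpen (O w) := fun w =>
    (isOpen_separating φ Metric.isClosed_closedBall Metric.isClosed_closedBall).preimage
      continuous_subtype_val
  have hD : ∀ w, Dense (O w) := fun w => by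
    rw [Metric.dense_iff]
    intro f ε hε
    obtain ⟨q, ⟨K, hK, hqK⟩, hq0, hqc⟩ := hq w (hSP w.2)
    obtain ⟨f', hf', hd, hs⟩ := exists_separating_near φ hgL hgI hK hqK hq0 hqc f.2 hε
    exact ⟨⟨f', hf'⟩, hd, hs⟩
  obtain ⟨f, hf⟩ := (dense_iInter_of_isOpen hO hD).nonempty
  refine ⟨f, f.2, fun x y hxy hx => ?_⟩
  have hmem : (x, y) ∈ ⋃ w ∈ S, Metric.closedBall w.1 (r w) ×ˢ Metric.closedBall w.2 (r w) :=
    hS ⟨hx, hxy⟩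
  simp only [mem_iUnion] at hmem
  obtain ⟨w, hw, hxw, hyw⟩ := hmem
  exact mem_iInter.1 hf ⟨w, hw⟩ x hxw y hyw

/-- A continuous map from the fixed point set to `[0,1]`, squeezed into `[1/4, 3/4]`, extends to a
function on `X` with the same range and `1/2`-Lipschitz along orbits: a Tietze extension, averaged
over time `3`. -/
lemma exists_base (e : {x : X // ∀ t, φ t x = x} → Icc (0 : ℝ) 1) (he : Continuous e) :
    ∃ g : C(X, ℝ), OrbitLipschitz φ (1 / 2) g ∧ (∀ x, g x ∈ Icc (1 / 4 : ℝ) (3 / 4)) ∧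
      ∀ x, g x.1 = 1 / 4 + (e x : ℝ) / 2 := by
  obtain ⟨k, hkI, hk⟩ := ContinuousMap.exists_extension_forall_mem_of_isClosedEmbedding
    (⟨fun x => 1 / 4 + (e x : ℝ) / 2, by fun_prop⟩ : C({x : X // ∀ t, φ t x = x}, ℝ))
    (t := Icc (1 / 4 : ℝ) (3 / 4)) (e := Subtype.val)
    (fun x => by
      have := (e x).2
      simp only [ContinuousMap.coe_mk]
      constructor <;> linarith [this.1, this.2])
    ⟨1 / 2, by norm_num, by norm_num⟩ (isClosed_fixed φ).isClosedEmbedding_subtypeVal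
  refine ⟨flowAvg φ 3 k, ?_, flowAvg_mem_Icc φ (by norm_num) hkI, fun x => ?_⟩
  · have := orbitLipschitz_flowAvg φ (b := 3) (M := 3 / 4) (by norm_num) (f := k) fun x => by
      rw [abs_le]; constructor <;> linarith [(hkI x).1, (hkI x).2]
    norm_num at this ⊢
    exact this
  · rw [flowAvg_fixed φ (by norm_num) k x.2]
    exact congrFun hk x

end Category

end BebutovKakutani

open BebutovKakutani in
/-- Lipschitz Bebutov–Kakutani theorem: a flow (X,T) embeds
equivariantly in L(ℝ) (with the translation action) if and only if its fixed point set
Fix(X,T) embeds topologically in the unit interval [0,1]. -/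
theorem stmt16 (X : Type*) [MetricSpace X] [CompactSpace X]
    (T : ℝ → X → X) (hT : Continuous fun q : ℝ × X => T q.1 q.2)
    (hT0 : ∀ x, T 0 x = x) (hTadd : ∀ s t x, T (s + t) x = T s (T t x)) :
    (∃ f : X → C(ℝ, ℝ),
        (∀ x, f x ∈ LR) ∧
        (∀ (s : ℝ) (x : X) (t : ℝ), f (T s x) t = f x (t + s)) ∧
        Topology.IsEmbedding f) ↔
    (∃ e : {x : X // ∀ t : ℝ, T t x = x} → Set.Icc (0:ℝ) 1,
        Topology.IsEmbedding e) := by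
  let φ : Flow ℝ X := ⟨T, hT, fun s t x => hTadd s t x, hT0⟩
  constructor
  · rintro ⟨f, hfL, hfT, hf⟩
    -- fixed points are sent to constant functions, so evaluation at `0` embeds them
    have : CompactSpace {x : X // ∀ t : ℝ, T t x = x} :=
      isCompact_iff_compactSpace.1 (isClosed_fixed φ).isCompact
    let e : {x : X // ∀ t : ℝ, T t x = x} → Set.Icc (0:ℝ) 1 := fun x => ⟨f x 0, (hfL x).2 0⟩
    have hec : Continuous e :=
      ((continuous_eval_const (0 : ℝ)).comp
        (hf.continuous.comp continuous_subtype_val)).subtype_mk _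
    have hconst : ∀ x : {x : X // ∀ t : ℝ, T t x = x}, ∀ t, f x t = f x 0 := fun x t => by
      have := hfT t x 0
      rw [x.2, zero_add] at this
      exact this.symm
    refine ⟨e, (hec.isClosedEmbedding fun x y hxy => ?_).isEmbedding⟩
    refine Subtype.ext (hf.injective (ContinuousMap.ext fun t => ?_))
    rw [hconst x t, hconst y t]
    exact congrArg Subtype.val hxy
  · rintro ⟨e, he⟩
    obtain ⟨g, hgL, hgI, hge⟩ := exists_base φ e he.continuous
    obtain ⟨k, ⟨hkL, hkI, hkg⟩, hk⟩ := exists_generic φ hgL hgI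
    let F : C(X × ℝ, ℝ) :=
      ⟨fun p => k (φ p.2 p.1), k.continuous.comp (φ.continuous continuous_snd continuous_fst)⟩
    have hF : ∀ x t, F.curry x t = k (φ t x) := fun x t => rfl
    refine ⟨F.curry, fun x => ⟨?_, fun t => hkI _⟩, fun s x t => ?_,
      (F.curry.continuous.isClosedEmbedding fun x y hxy => ?_).isEmbedding⟩
    · refine LipschitzWith.of_dist_le_mul fun s t => ?_
      have := hkL (s - t) (φ t x)
      rw [← φ.map_add, sub_add_cancel] at this
      rw [hF, hF, Real.dist_eq, Real.dist_eq, NNReal.coe_one]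
      exact this
    · rw [hF, hF, φ.map_add]
    · by_contra hne
      have heq : ∀ t, k (φ t x) = k (φ t y) := fun t => DFunLike.congr_fun hxy t
      by_cases hx : ∀ t, φ t x = x
      · by_cases hy : ∀ t, φ t y = y
        · have h0 := heq 0
          rw [hx, hy, hkg x hx, hkg y hy, hge ⟨x, hx⟩, hge ⟨y, hy⟩] at h0
          have : e ⟨x, hx⟩ = e ⟨y, hy⟩ := Subtype.ext (by linarith)
          exact hne (congrArg Subtype.val (he.injective this))
        · obtain ⟨t, ht⟩ := hk y x (Ne.symm hne) hy
          exact ht (heq t).symm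
      · obtain ⟨t, ht⟩ := hk x y hne hx
        exact ht (heq t)
end
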